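/- Let H be a real Hilbert space, let η > 0, L > 0, δ ≥ 0, let F_k, F : H → ℝ be differentiable functions with ∇F_k L-Lipschitz, and suppose ‖∇F_k(x) − ∇F(x)‖ ≤ δ for all x ∈ H. Fix an initial point w₀ ∈ H and define sequences w, v : ℕ → H by w(0) = v(0) = w₀, w(e) = w(e−1) − η∇F_k(w(e−1)) and v(e) = v(e−1) − η∇F(v(e−1)) for e ≥ 1. Then for all e ∈ ℕ, ‖w(e) − v(e)‖ ≤ (δ/L)·((ηL + 1)^e − 1). -/

import Mathlib

/-!
The virtual model is a perturbed orbit of the client's own update map `x ↦ x - η ∇F_k(x)`: replacing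
`∇F` by `∇F_k` in one of its steps moves the result by at most `ηδ`. The client's map is
`(ηL + 1)`-Lipschitz, so each earlier error is magnified by at most `ηL + 1` per step, and the
accumulated errors form the geometric sum `ηδ ∑ (ηL + 1)^i`.
-/

section DescentStep

open Finset
open scoped NNReal

theorem le_pow_mul_add_geom_sum {R : Type*} [CommSemiring R] [PartialOrder R] [IsOrderedRing R]
    {u : ℕ → R} {b c : R} (hc : 0 ≤ c) (hu : ∀ n, u (n + 1) ≤ c * u n + b) (n : ℕ) :
    u n ≤ c ^ n * u 0 + b * ∑ i ∈ range n, c ^ i := by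
  have h_reflect : ∑ k ∈ range n, c ^ (n - (k + 1)) = ∑ i ∈ range n, c ^ i := by
    simpa only [Nat.sub_sub, Nat.add_comm 1] using sum_range_reflect (c ^ ·) n
  have h_gronwall := discrete_gronwall_prod_general (n₀ := 0) (b := fun _ ↦ b) (c := fun _ ↦ c)
    (fun k _ ↦ hu k) (fun _ _ ↦ hc) n.zero_le
  simpa only [prod_const, Nat.card_Ico, card_range, Nat.Ico_zero_eq_range, ← mul_sum, h_reflect,
    mul_comm (u 0)] using h_gronwall

theorem dist_orbit_pseudoOrbit_le {X : Type*} [PseudoMetricSpace X] {Φ : X → X} {K : ℝ≥0}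
    (hΦ : LipschitzWith K Φ) {w v : ℕ → X} {ε : ℝ} (hw : ∀ n, w (n + 1) = Φ (w n))
    (hv : ∀ n, dist (Φ (v n)) (v (n + 1)) ≤ ε) (n : ℕ) :
    dist (w n) (v n) ≤ K ^ n * dist (w 0) (v 0) + ε * ∑ i ∈ range n, (K : ℝ) ^ i := by
  refine le_pow_mul_add_geom_sum (u := fun n ↦ dist (w n) (v n)) K.coe_nonneg (fun n ↦ ?_) n
  calc dist (w (n + 1)) (v (n + 1))
      ≤ dist (Φ (w n)) (Φ (v n)) + dist (Φ (v n)) (v (n + 1)) := hw n ▸ dist_triangle _ _ _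
    _ ≤ K * dist (w n) (v n) + ε := add_le_add (hΦ.dist_le_mul _ _) (hv n)

variable {𝕜 E : Type*} [NormedField 𝕜] [SeminormedAddCommGroup E] [NormedSpace 𝕜 E]

/-- One step of size `η` against the vector field `f`; for `f = ∇F` this is the gradient descent
update for `F`. Taking a vector field rather than `F` itself, no inner product is needed. -/
def descentStep (η : 𝕜) (f : E → E) (x : E) : E :=
  x - η • f x

theorem lipschitzWith_descentStep (η : 𝕜) {f : E → E} {K : ℝ≥0} (hf : LipschitzWith K f) :
    LipschitzWith (‖η‖₊ * K + 1) (descentStep η f) := by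
  rw [add_comm]
  exact LipschitzWith.id.sub ((lipschitzWith_smul η).comp hf)

theorem dist_descentStep_descentStep (η : 𝕜) (f g : E → E) (x : E) :
    dist (descentStep η f x) (descentStep η g x) = ‖η‖ * dist (f x) (g x) := by
  rw [descentStep, descentStep, dist_sub_left, dist_smul₀]

theorem client_virtual_divergence_general {η : 𝕜} {f g : E → E} {K : ℝ≥0} {δ : ℝ} {w v : ℕ → E}
    (hK : K ≠ 0) (hf : LipschitzWith K f) (hfg : ∀ n, dist (f (v n)) (g (v n)) ≤ δ)
    (hw : ∀ n, w (n + 1) = descentStep η f (w n)) (hv : ∀ n, v (n + 1) = descentStep η g (v n))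
    (n : ℕ) :
    dist (w n) (v n) ≤
      (‖η‖ * K + 1) ^ n * dist (w 0) (v 0) + δ / K * ((‖η‖ * K + 1) ^ n - 1) := by
  have h_pseudo (m : ℕ) : dist (descentStep η f (v m)) (v (m + 1)) ≤ ‖η‖ * δ := by
    rw [hv, dist_descentStep_descentStep]
    exact mul_le_mul_of_nonneg_left (hfg m) (norm_nonneg η)
  have h_geom : ‖η‖ * δ * ∑ i ∈ range n, (‖η‖ * K + 1) ^ i =
      δ / K * ((‖η‖ * K + 1) ^ n - 1) := by
    rw [← mul_geom_sum, add_sub_cancel_right]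
    field_simp
  rw [← h_geom]
  simpa only [NNReal.coe_add, NNReal.coe_mul, coe_nnnorm, NNReal.coe_one] using
    dist_orbit_pseudoOrbit_le (lipschitzWith_descentStep η hf) hw h_pseudo n

end DescentStep

/-- Lemma 2: the upper bound of the divergence between the FedGroup client
model and the virtual group model after `e` local gradient steps. -/
theorem client_virtual_divergence
    {H : Type*} [NormedAddCommGroup H] [InnerProductSpace ℝ H] [CompleteSpace H]
    (η L δ : ℝ) (hη : 0 < η) (hL : 0 < L) (hδ : 0 ≤ δ)
    (Fk F : H → ℝ)
    (hFk : Differentiable ℝ Fk) (hF : Differentiable ℝ F)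
    (hlip : ∀ w v : H, ‖gradient Fk w - gradient Fk v‖ ≤ L * ‖w - v‖)
    (hdiv : ∀ x : H, ‖gradient Fk x - gradient F x‖ ≤ δ)
    (w₀ : H) (w v : ℕ → H)
    (hw0 : w 0 = w₀) (hv0 : v 0 = w₀)
    (hw : ∀ e : ℕ, 1 ≤ e → w e = w (e - 1) - η • gradient Fk (w (e - 1)))
    (hv : ∀ e : ℕ, 1 ≤ e → v e = v (e - 1) - η • gradient F (v (e - 1))) :
    ∀ e : ℕ, ‖w e - v e‖ ≤ (δ / L) * ((η * L + 1) ^ e - 1) := by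
  intro e
  lift L to NNReal using hL.le
  simp only [← dist_eq_norm] at hlip hdiv ⊢
  simpa [hw0, hv0, abs_of_pos hη] using
    client_virtual_divergence_general (NNReal.coe_pos.1 hL).ne' (.of_dist_le_mul hlip)
      (fun n ↦ hdiv (v n)) (fun n ↦ hw (n + 1) n.succ_pos) (fun n ↦ hv (n + 1) n.succ_pos) e
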